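/- For all integers k ≥ 1 and all integers n ≥ (100k)^{k+1}, the real numbers log(n+1), log(n+2), ..., log(n+k) are linearly independent over ℚ; equivalently, the only tuple of integers (m_1, ..., m_k) ∈ ℤ^k such that ∏_{j=1}^k (n+j)^{m_j} = 1 (as an equality of positive rational numbers) is (0, 0, ..., 0). -/

import Mathlib

/-!
Write `v_p` for the `p`-adic valuation. Assign to each prime `p` an index `J p` at which
`v_p (n + 1 + j)` is maximal, and form the `k × k` matrix
`A i j = ∑_{p : J p = j} v_p (n + 1 + i) log p`.
Row `i` sums to `log (n + 1 + i)`. If `J p ≠ i`, then `p ^ v_p (n + 1 + i)` divides two distinct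
terms of the progression, hence their nonzero difference, so it is less than `k`
(`nonpeak_bound`); in particular it is trivial unless `p < k`. There are at most `k / 2` primes
below `k` (`two_mul_card_primes_lt_le`), so the off-diagonal part of each row is at most
`(k / 2) log k`, which is less than half of the row sum. Thus `A` is strictly diagonally dominant and
`det A ≠ 0` (Gershgorin). A relation `∏ (n + 1 + j) ^ m_j = 1` gives
`∑ j, m_j v_p (n + 1 + j) = 0` for every `p`, that is `m A = 0`, whence `m = 0`.
-/

open Finset

/-- At most half of the numbers below `k` are prime: `p ↦ (p - 1) / 2` is injective on primes. -/
lemma two_mul_card_primes_lt_le (k : ℕ) : 2 * #{p ∈ range k | p.Prime} ≤ k := by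
  have h : #{p ∈ range k | p.Prime} ≤ #(range (k / 2)) := by
    refine card_le_card_of_injOn (fun p => (p - 1) / 2) ?_ ?_
    · intro p hp
      simp only [coe_filter, mem_range, Set.mem_ofPred_eq, coe_range, Set.mem_Iio] at hp ⊢
      have := hp.2.two_le
      omega
    · intro p hp q hq hpq
      simp only [coe_filter, mem_range, Set.mem_ofPred_eq] at hp hq hpq
      have := hp.2.two_le
      have := hq.2.two_le
      rcases hp.2.eq_two_or_odd with h1 | h1 <;> rcases hq.2.eq_two_or_odd with h2 | h2 <;> omega
  rw [card_range] at h
  omega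

lemma nonpeak_bound {k n : ℕ} {i j : Fin k} (hij : i ≠ j) {p : ℕ} (hp : p.Prime)
    (hle : (n + 1 + (i : ℕ)).factorization p ≤ (n + 1 + (j : ℕ)).factorization p) :
    ((n + 1 + (i : ℕ)).factorization p : ℝ) * Real.log p ≤ if p < k then Real.log k else 0 := by
  set v := (n + 1 + (i : ℕ)).factorization p with hv
  have h1 : p ^ v ∣ n + 1 + (i : ℕ) := Nat.ordProj_dvd _ _
  have h2 : p ^ v ∣ n + 1 + (j : ℕ) := (pow_dvd_pow p hle).trans (Nat.ordProj_dvd _ _)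
  have hne : (i : ℕ) ≠ j := fun h => hij (Fin.ext h)
  have hi := i.2
  have hj := j.2
  have hlt : p ^ v < k := by
    rcases lt_or_gt_of_ne hne with h | h
    · have := Nat.le_of_dvd (by omega) (Nat.dvd_sub h2 h1)
      omega
    · have := Nat.le_of_dvd (by omega) (Nat.dvd_sub h1 h2)
      omega
  split_ifs with hpk
  · rw [← Real.log_pow]
    have : 0 < p := hp.pos
    exact Real.log_le_log (by positivity) (by exact_mod_cast hlt.le)
  · have : v = 0 := by
      by_contra h0
      have := Nat.le_self_pow h0 p
      omega
    simp [this]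

lemma sum_mul_factorization_eq_zero {k n : ℕ} {m : Fin k → ℤ}
    (h : ∏ j : Fin k, ((n + 1 + (j : ℕ) : ℕ) : ℚ) ^ (m j) = 1) {p : ℕ} (hp : p.Prime) :
    ∑ j : Fin k, m j * ((n + 1 + (j : ℕ)).factorization p : ℤ) = 0 := by
  have := Fact.mk hp
  have key : ∀ s : Finset (Fin k),
      padicValRat p (∏ j ∈ s, ((n + 1 + (j : ℕ) : ℕ) : ℚ) ^ (m j))
        = ∑ j ∈ s, m j * ((n + 1 + (j : ℕ)).factorization p : ℤ) := by
    intro s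
    have hne : ∀ j : Fin k, ((n + 1 + (j : ℕ) : ℕ) : ℚ) ^ (m j) ≠ 0 := fun j =>
      zpow_ne_zero _ (by positivity)
    induction s using Finset.induction_on with
    | empty => simp
    | insert a s ha ih =>
      rw [prod_insert ha, sum_insert ha,
        padicValRat.mul (hne a) (prod_ne_zero_iff.2 fun j _ => hne j), ih, padicValRat.zpow,
        padicValRat.of_nat, Nat.factorization_def _ hp]
  rw [← key univ, h, padicValRat.one]

lemma log_eq_sum_primes {a N : ℕ} (haN : a < N) :
    ∑ p ∈ range N with p.Prime, (a.factorization p : ℝ) * Real.log p = Real.log a := by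
  rw [Real.log_nat_eq_sum_factorization, Finsupp.sum]
  symm
  refine sum_subset ?_ ?_
  · intro p hp
    rw [Nat.support_factorization] at hp
    have h1 := Nat.prime_of_mem_primeFactors hp
    have h2 := Nat.le_of_mem_primeFactors hp
    simp only [mem_filter, mem_range]
    exact ⟨by omega, h1⟩
  · intro p _ hp
    rw [Finsupp.notMem_support_iff.1 hp]
    simp

/-- Multiplicative independence of `n + 1, …, n + k`. -/
lemma mult_indep (k : ℕ) (hk : 1 ≤ k) (n : ℕ) (hn : (100 * k) ^ (k + 1) ≤ n)
    (m : Fin k → ℤ) (h : ∏ j : Fin k, ((n + 1 + (j : ℕ) : ℕ) : ℚ) ^ (m j) = 1) : m = 0 := by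
  have hpeak : ∀ p : ℕ, ∃ j : Fin k, ∀ i : Fin k,
      (n + 1 + (i : ℕ)).factorization p ≤ (n + 1 + (j : ℕ)).factorization p := by
    intro p
    obtain ⟨j, -, hj⟩ := exists_max_image (univ : Finset (Fin k))
      (fun i => (n + 1 + (i : ℕ)).factorization p) ⟨⟨0, hk⟩, mem_univ _⟩
    exact ⟨j, fun i => hj i (mem_univ i)⟩
  choose J hJ using hpeak
  set P : Finset ℕ := {p ∈ range (n + 1 + k) | p.Prime} with hP
  let w : Fin k → ℕ → ℝ := fun i p => ((n + 1 + (i : ℕ)).factorization p : ℝ) * Real.log p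
  have hw : ∀ i p, 0 ≤ w i p := fun i p =>
    mul_nonneg (Nat.cast_nonneg _) (Real.log_natCast_nonneg p)
  let A : Matrix (Fin k) (Fin k) ℝ := fun i j => ∑ p ∈ P with J p = j, w i p
  have hA : ∀ i j, 0 ≤ A i j := fun i j => sum_nonneg fun p _ => hw i p
  have hrow : ∀ i, ∑ j, A i j = Real.log ((n + 1 + (i : ℕ) : ℕ) : ℝ) := by
    intro i
    rw [← log_eq_sum_primes (N := n + 1 + k) (by have := i.2; omega)]
    exact sum_fiberwise P J (w i)
  have hlogk : 0 ≤ Real.log k := Real.log_natCast_nonneg k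
  have hoff : ∀ i, ∑ j ∈ univ.erase i, A i j ≤ #{p ∈ range k | p.Prime} * Real.log k := by
    intro i
    calc ∑ j ∈ univ.erase i, A i j
        ≤ ∑ j ∈ univ.erase i, ∑ p ∈ P with J p = j, (if p < k then Real.log k else 0) := by
          refine sum_le_sum fun j hj => sum_le_sum fun p hp => ?_
          rw [mem_filter, hP, mem_filter] at hp
          have hij : i ≠ J p := by
            rw [hp.2]
            exact (ne_of_mem_erase hj).symm
          exact nonpeak_bound hij hp.1.2 (hJ p i)
      _ ≤ ∑ j, ∑ p ∈ P with J p = j, (if p < k then Real.log k else 0) := by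
          refine sum_le_sum_of_subset_of_nonneg (erase_subset _ _) fun j _ _ =>
            sum_nonneg fun p _ => ?_
          split_ifs
          · exact hlogk
          · exact le_rfl
      _ = ∑ p ∈ P, (if p < k then Real.log k else 0) := sum_fiberwise P J _
      _ = #{p ∈ P | p < k} * Real.log k := by
          rw [← sum_filter, sum_const, nsmul_eq_mul]
      _ ≤ #{p ∈ range k | p.Prime} * Real.log k := by
          refine mul_le_mul_of_nonneg_right ?_ hlogk
          refine Nat.cast_le.2 (card_le_card fun p hp => ?_)
          simp only [hP, mem_filter, mem_range] at hp ⊢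
          exact ⟨hp.2, hp.1.2⟩
  have hkey : ∀ i : Fin k, (2 * #{p ∈ range k | p.Prime} : ℝ) * Real.log k
      < Real.log ((n + 1 + (i : ℕ) : ℕ) : ℝ) := by
    intro i
    have h1 : (2 * #{p ∈ range k | p.Prime} : ℝ) ≤ k := by
      exact_mod_cast two_mul_card_primes_lt_le k
    have h2 : k ^ k < n + 1 + (i : ℕ) := by
      have : k ^ k ≤ (100 * k) ^ (k + 1) :=
        (Nat.pow_le_pow_left (by omega) k).trans (Nat.pow_le_pow_right (by omega) (by omega))
      omega
    calc _ ≤ (k : ℝ) * Real.log k := mul_le_mul_of_nonneg_right h1 hlogk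
      _ = Real.log ((k ^ k : ℕ) : ℝ) := by push_cast; rw [Real.log_pow]
      _ < _ := Real.log_lt_log (by exact_mod_cast Nat.pow_pos hk) (by exact_mod_cast h2)
  have hdet : A.det ≠ 0 := by
    refine det_ne_zero_of_sum_row_lt_diag fun i => ?_
    simp only [Real.norm_of_nonneg (hA _ _)]
    have h1 := hrow i
    rw [← add_sum_erase _ _ (mem_univ i)] at h1
    have h2 := hoff i
    have h3 := hkey i
    linarith
  have hker : Matrix.vecMul (fun j => (m j : ℝ)) A = 0 := by
    ext j
    simp only [Matrix.vecMul, dotProduct, Pi.zero_apply, A, mul_sum]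
    rw [sum_comm]
    refine sum_eq_zero fun p hp => ?_
    rw [mem_filter, hP, mem_filter] at hp
    have h0 := sum_mul_factorization_eq_zero h hp.1.2
    have h1 : ∑ i : Fin k, (m i : ℝ) * ((n + 1 + (i : ℕ)).factorization p : ℝ) = 0 := by
      exact_mod_cast h0
    simp only [w, ← mul_assoc]
    rw [← sum_mul, h1, zero_mul]
  have hm := Matrix.eq_zero_of_vecMul_eq_zero hdet hker
  ext j
  have hmj : (m j : ℝ) = 0 := congrFun hm j
  exact_mod_cast hmj

/-- For all `k ≥ 1` and all `n ≥ (100 k)^(k+1)`, the real numbers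
`log (n+1), ..., log (n+k)` are linearly independent over `ℚ`; equivalently, the only
tuple of integers `(m₁, ..., m_k)` with `∏_{j=1}^k (n+j)^(m_j) = 1` (in the positive
rationals) is the zero tuple. -/
theorem statement0 (k : ℕ) (hk : 1 ≤ k) (n : ℕ) (hn : (100 * k) ^ (k + 1) ≤ n) :
    LinearIndependent ℚ (fun j : Fin k => Real.log ((n + 1 + (j : ℕ) : ℕ) : ℝ)) ∧
      ∀ m : Fin k → ℤ,
        (∏ j : Fin k, ((n + 1 + (j : ℕ) : ℕ) : ℚ) ^ (m j) = 1) → m = 0 := by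
  refine ⟨?_, mult_indep k hk n hn⟩
  rw [← LinearIndependent.iff_fractionRing ℤ ℚ, Fintype.linearIndependent_iff]
  intro m hm
  refine congrFun (mult_indep k hk n hn m ?_)
  have hpos : ∀ j : Fin k, (0 : ℝ) < ((n + 1 + (j : ℕ) : ℕ) : ℝ) ^ (m j) := fun j =>
    zpow_pos (by positivity) _
  have hlog : Real.log (∏ j : Fin k, ((n + 1 + (j : ℕ) : ℕ) : ℝ) ^ (m j)) = 0 := by
    rw [Real.log_prod fun j _ => (hpos j).ne', ← hm]
    exact sum_congr rfl fun j _ => by rw [Real.log_zpow, zsmul_eq_mul]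
  have hone := Real.eq_one_of_pos_of_log_eq_zero (prod_pos fun j _ => hpos j) hlog
  apply Rat.cast_injective (α := ℝ)
  simpa only [Rat.cast_prod, Rat.cast_zpow, Rat.cast_natCast, Rat.cast_one] using hone
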